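/- Let ψ be an approximation function with ψ(q) < 1/2 for all q, satisfying ψ(q) = O((q (log log q)²)⁻¹) and ∑_q ψ(q) = ∞. Then for every tamely Liouville irrational number γ, the set W(ψ,γ) has Lebesgue measure one. -/

import Mathlib

open MeasureTheory Filter Real

/-- Distance from a real number to the nearest integer. -/
noncomputable def dnint (x : ℝ) : ℝ := |x - round x|

/-- The inhomogeneous approximation set `W(ψ,γ)`. -/
noncomputable def W (ψ : ℕ → ℝ) (γ : ℝ) : Set ℝ :=
  {x ∈ Set.Icc (0:ℝ) 1 | {q : ℕ | 0 < q ∧ dnint (q * x - γ) < ψ q}.Infinite}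

/-- `σ_γ(Q)`: the infimum of all `σ > 0` with `‖qγ‖ ≥ q^{-σ}` for all `2 ≤ q ≤ Q`. -/
noncomputable def sigmaExp (γ : ℝ) (Q : ℕ) : ℝ :=
  sInf {σ : ℝ | 0 < σ ∧ ∀ q : ℕ, 2 ≤ q → q ≤ Q → (q : ℝ) ^ (-σ) ≤ dnint (q * γ)}

/-- `γ` is tamely Liouville if `σ_γ(Q) ≤ C (log₂ Q)^{1/4-ε}` for all `Q ≥ 2`. -/
def TamelyLiouville (γ : ℝ) : Prop :=
  ∃ ε > (0:ℝ), ∃ C > (0:ℝ), ∀ Q : ℕ, 2 ≤ Q →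
    sigmaExp γ Q ≤ C * (Real.logb 2 Q) ^ ((1:ℝ)/4 - ε)

/-!
On the circle let `A q` be the set of `x` with `‖q x - γ‖ < ψ q`. Averaging over the translations by
multiples of `1 / n` gives `|A m ∩ A n| ≤ |A m| |A n| + 2 gcd(m, n) ψ n / n`, so the `A q` are
independent up to an excess. If `m ≠ n` have greatest common divisor `d` and `A m` meets `A n`, then
eliminating `x` shows that `(|m - n| / d) γ` is within `2 (max m n / d) max (ψ m) (ψ n)` of an
integer. Since `γ` is not too well approximable, its multiples return to the origin rarely enough
for the excess to be summed over `m`, grouped by the dyadic size of `m / n` and by `d`: the number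
`log log n` of relevant scales and a factor `log log n` from `∑ 1 / d` over the divisors of `n` are
paid for by the factor `(log log n)²` in the bound on `ψ`. The divisor sum is controlled only when
`n` does not have too many divisors compared with `n ψ n`, but the remaining indices contribute a
convergent part of `∑ ψ`. Hence the number of `q ≤ Q` with `x ∈ A q` has variance bounded by a
multiple of its mean, and Chebyshev's inequality gives full measure with no zero-one law.
-/

section Counting

theorem card_Ioo_floor_ceil_le {u v : ℝ} (h : u ≤ v) :
    ((Finset.Ioo ⌊u⌋ ⌈v⌉).card : ℝ) ≤ v - u + 1 := by
  rw [Int.card_Ioo]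
  have hu := Int.lt_floor_add_one u
  have hv := Int.ceil_lt_add_one v
  rcases le_total 0 (⌈v⌉ - ⌊u⌋ - 1) with hpos | hneg
  · rw [← Int.cast_natCast, Int.toNat_of_nonneg hpos]
    push_cast
    linarith
  · rw [Int.toNat_of_nonpos hneg, Nat.cast_zero]
    linarith

theorem card_filter_range_mul_le (P : ℕ → Prop) [DecidablePred P] {n : ℕ} {B : ℝ}
    (h : ∀ a, (((Finset.range n).filter fun k => P (a + k)).card : ℝ) ≤ B) (d : ℕ) :
    (((Finset.range (d * n)).filter P).card : ℝ) ≤ d * B := by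
  simp only [← Nat.count_eq_card_filter_range] at h ⊢
  induction d with
  | zero => simp
  | succ d ih =>
    rw [add_one_mul, Nat.count_add]
    push_cast
    linarith [h (d * n)]

theorem coe_add_nsmul_coe (t s : ℝ) (k : ℕ) :
    (t : UnitAddCircle) + k • (s : UnitAddCircle) = ((t + k * s : ℝ) : UnitAddCircle) := by
  rw [AddCircle.coe_add, ← AddCircle.coe_nsmul, nsmul_eq_mul]

theorem card_filter_norm_add_nsmul_lt_le_of_coprime (y : UnitAddCircle) {p : ℤ} {n : ℕ} (hn : 0 < n)
    (hpn : IsCoprime p n) {a : ℝ} (ha : 0 ≤ a) :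
    (((Finset.range n).filter fun k =>
      ‖y + k • ((p / n : ℝ) : UnitAddCircle)‖ < a).card : ℝ) ≤ 2 * a * n + 1 := by
  obtain ⟨t, rfl⟩ := QuotientAddGroup.mk_surjective y
  have hn' : (0 : ℝ) < n := by exact_mod_cast hn
  -- `n` times the signed distance from `t + k p / n` to its nearest integer is `n t + f k`.
  let f : ℕ → ℤ := fun k => p * k - n * round (t + k * (p / n) : ℝ)
  have hmaps : Set.MapsTo f
      ((Finset.range n).filter fun k =>
        ‖(t : UnitAddCircle) + k • ((p / n : ℝ) : UnitAddCircle)‖ < a)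
      (Finset.Ioo ⌊-(n * t) - a * n⌋ ⌈-(n * t) + a * n⌉) := by
    intro k hk
    simp only [Finset.coe_filter, Set.mem_ofPred_eq] at hk
    have hlt := hk.2
    rw [coe_add_nsmul_coe, UnitAddCircle.norm_eq] at hlt
    have hf : (f k : ℝ) = n * (t + k * (p / n) - round (t + k * (p / n) : ℝ)) - n * t := by
      simp only [f]
      push_cast
      field_simp
      ring
    obtain ⟨h1, h2⟩ := abs_lt.1 hlt
    rw [Finset.coe_Ioo, Set.mem_Ioo]
    constructor
    · refine Int.floor_lt.2 ?_
      rw [hf]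
      nlinarith
    · refine Int.lt_ceil.2 ?_
      rw [hf]
      nlinarith
  have hinj : Set.InjOn f ((Finset.range n).filter fun k =>
        ‖(t : UnitAddCircle) + k • ((p / n : ℝ) : UnitAddCircle)‖ < a) := by
    intro k hk l hl hkl
    simp only [Finset.coe_filter, Set.mem_ofPred_eq, Finset.mem_range] at hk hl
    have hdvd : (n : ℤ) ∣ p * (k - l) :=
      ⟨round (t + k * (p / n) : ℝ) - round (t + l * (p / n) : ℝ), by simp only [f] at hkl; linarith⟩
    have hmod : (l : ℤ) ≡ k [ZMOD n] := Int.modEq_iff_dvd.2 (hpn.symm.dvd_of_dvd_mul_left hdvd)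
    exact ((Int.natCast_modEq_iff.1 hmod).eq_of_lt_of_lt hl.1 hk.1).symm
  calc _ ≤ ((Finset.Ioo ⌊-(n * t) - a * n⌋ ⌈-(n * t) + a * n⌉).card : ℝ) := by
        exact_mod_cast Finset.card_le_card_of_injOn f hmaps hinj
    _ ≤ -(n * t) + a * n - (-(n * t) - a * n) + 1 :=
        card_Ioo_floor_ceil_le (by linarith [mul_nonneg ha hn'.le])
    _ = 2 * a * n + 1 := by ring

theorem card_filter_norm_add_nsmul_lt_le (y : UnitAddCircle) (p : ℤ) {n : ℕ} (hn : 0 < n)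
    {a : ℝ} (ha : 0 ≤ a) :
    (((Finset.range n).filter fun k =>
      ‖y + k • ((p / n : ℝ) : UnitAddCircle)‖ < a).card : ℝ) ≤ 2 * a * n + p.gcd n := by
  obtain ⟨n', hn'⟩ : p.gcd n ∣ n := by exact_mod_cast Int.gcd_dvd_right p n
  obtain ⟨p', hp'⟩ := Int.gcd_dvd_left p n
  have hd : 0 < p.gcd n := Int.gcd_pos_of_ne_zero_right _ (by exact_mod_cast hn.ne')
  set d := p.gcd n
  have hcop : IsCoprime p' n' := by
    refine Int.isCoprime_iff_gcd_eq_one.2 (Nat.eq_of_mul_eq_mul_left hd ?_)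
    calc d * p'.gcd n' = p.gcd n := by
          rw [hp', hn', Nat.cast_mul, Int.gcd_mul_left, Int.natAbs_natCast]
      _ = d * 1 := (mul_one d).symm
  have hn'0 : 0 < n' := Nat.pos_of_mul_pos_left (hn' ▸ hn)
  have hdiv : (p / n : ℝ) = p' / n' := by
    rw [hp', hn']
    push_cast
    exact mul_div_mul_left _ _ (by exact_mod_cast hd.ne')
  have hblock (b : ℕ) : (((Finset.range n').filter fun k =>
      ‖y + (b + k) • ((p / n : ℝ) : UnitAddCircle)‖ < a).card : ℝ) ≤ 2 * a * n' + 1 := by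
    simp only [add_nsmul, ← add_assoc, hdiv]
    exact card_filter_norm_add_nsmul_lt_le_of_coprime _ hn'0 hcop ha
  have hcount := card_filter_range_mul_le
    (fun k => ‖y + k • ((p / n : ℝ) : UnitAddCircle)‖ < a) hblock d
  have hnd : (n : ℝ) = d * n' := by exact_mod_cast hn'
  rw [← hn'] at hcount
  exact hcount.trans_eq (by rw [hnd]; ring)

end Counting

section Overlap

open scoped Classical in
theorem card_mul_measure_inter_le {G ι : Type*} [AddGroup G] [MeasurableSpace G] [MeasurableAdd G]
    (μ : Measure G) [μ.IsAddRightInvariant] {A B : Set G}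
    (hA : MeasurableSet A) (s : Finset ι) (g : ι → G) (hB : ∀ i x, x + g i ∈ B ↔ x ∈ B)
    {c : ENNReal} (hc : ∀ x, ((s.filter fun i => x + g i ∈ A).card : ENNReal) ≤ c) :
    s.card * μ (A ∩ B) ≤ c * μ B := by
  let E : ι → Set G := fun i => (· + g i) ⁻¹' A
  have hE (i : ι) : MeasurableSet (E i) := measurable_add_const (g i) hA
  have hinter (i : ι) : μ (A ∩ B) = μ (E i ∩ B) := by
    rw [← measure_preimage_add_right μ (g i) (A ∩ B)]
    congr 1
    ext x
    simp only [E, Set.mem_inter_iff, Set.mem_preimage, hB]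
  have hsum (x : G) : ∑ i ∈ s, (E i).indicator (1 : G → ENNReal) x
      = (s.filter fun i => x + g i ∈ A).card := by
    simp only [E, Set.indicator_apply, Set.mem_preimage, Pi.one_apply, Finset.sum_boole]
  calc s.card * μ (A ∩ B)
      = ∑ i ∈ s, ∫⁻ x in B, (E i).indicator 1 x ∂μ := by
        rw [← nsmul_eq_mul, ← Finset.sum_const]
        refine Finset.sum_congr rfl fun i _ => ?_
        rw [lintegral_indicator_one (hE i), Measure.restrict_apply (hE i), hinter i]
    _ = ∫⁻ x in B, ∑ i ∈ s, (E i).indicator 1 x ∂μ :=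
        (lintegral_finsetSum _ fun i _ => measurable_one.indicator (hE i)).symm
    _ ≤ ∫⁻ _ in B, c ∂μ := lintegral_mono fun x => (hsum x).trans_le (hc x)
    _ = c * μ B := setLIntegral_const B c

/-- The set of points `x` of the circle with `‖q x - α‖ < a`: the limsup set of these, over `q`, is
`W` transported to the circle. -/
def nsmulBall (q : ℕ) (α : UnitAddCircle) (a : ℝ) : Set UnitAddCircle :=
  (q • ·) ⁻¹' Metric.ball α a

variable {q r : ℕ} {α β : UnitAddCircle} {a b : ℝ}

theorem mem_nsmulBall {x : UnitAddCircle} : x ∈ nsmulBall q α a ↔ ‖q • x - α‖ < a := by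
  rw [nsmulBall, Set.mem_preimage, mem_ball_iff_norm]

theorem measurableSet_nsmulBall : MeasurableSet (nsmulBall q α a) :=
  (measurable_const_smul q) measurableSet_ball

theorem volume_nsmulBall (hq : 0 < q) :
    volume (nsmulBall q α a) = ENNReal.ofReal (min 1 (2 * a)) := by
  have hmp : MeasurePreserving (fun x : UnitAddCircle => q • x) volume volume := by
    simpa only [natCast_zsmul] using
      Measure.measurePreserving_zsmul volume (n := q) (by exact_mod_cast hq.ne')
  rw [nsmulBall, hmp.measure_preimage measurableSet_ball.nullMeasurableSet,
    ← AddCircle.volume_closedBall]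
  exact measure_congr AddCircle.closedBall_ae_eq_ball.symm

theorem volume_real_nsmulBall (hq : 0 < q) (ha : 0 ≤ a) (ha' : a ≤ 1 / 2) :
    volume.real (nsmulBall q α a) = 2 * a := by
  rw [measureReal_def, volume_nsmulBall hq, min_eq_right (by linarith),
    ENNReal.toReal_ofReal (by linarith)]

theorem add_coe_div_mem_nsmulBall_iff (hr : 0 < r) (k : ℕ) (x : UnitAddCircle) :
    x + ((k / r : ℝ) : UnitAddCircle) ∈ nsmulBall r β b ↔ x ∈ nsmulBall r β b := by
  have hr' : (r : ℝ) ≠ 0 := by exact_mod_cast hr.ne'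
  have hzero : r • ((k / r : ℝ) : UnitAddCircle) = 0 := by
    rw [← AddCircle.coe_nsmul, nsmul_eq_mul, mul_div_cancel₀ _ hr', AddCircle.coe_eq_zero_iff]
    exact ⟨k, by simp⟩
  rw [mem_nsmulBall, mem_nsmulBall, nsmul_add, hzero, add_zero]

open scoped Classical in
theorem card_filter_add_coe_div_mem_nsmulBall_le (x : UnitAddCircle) (ha : 0 ≤ a) (hr : 0 < r) :
    (((Finset.range r).filter fun k : ℕ =>
      x + ((k / r : ℝ) : UnitAddCircle) ∈ nsmulBall q α a).card : ℝ) ≤ 2 * a * r + q.gcd r := by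
  have hshift (k : ℕ) : q • (x + ((k / r : ℝ) : UnitAddCircle)) - α
      = q • x - α + k • (((q : ℤ) / r : ℝ) : UnitAddCircle) := by
    rw [nsmul_add, ← AddCircle.coe_nsmul, ← AddCircle.coe_nsmul, add_sub_right_comm]
    simp only [nsmul_eq_mul, Int.cast_natCast]
    congr 2
    ring
  have hcount := card_filter_norm_add_nsmul_lt_le (q • x - α) q hr ha
  simp only [mem_nsmulBall, hshift]
  rw [Int.gcd_natCast_natCast] at hcount
  convert hcount

theorem volume_real_nsmulBall_inter_le (ha : 0 ≤ a) (hb : 0 ≤ b) (hr : 0 < r) :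
    volume.real (nsmulBall q α a ∩ nsmulBall r β b) ≤ 4 * a * b + 2 * q.gcd r * (b / r) := by
  classical
  have hr' : (0 : ℝ) < r := by exact_mod_cast hr
  have hvol : volume.real (nsmulBall r β b) ≤ 2 * b := by
    rw [measureReal_def, volume_nsmulBall hr, ENNReal.toReal_ofReal (by positivity)]
    exact min_le_right _ _
  have havg := card_mul_measure_inter_le volume
    (measurableSet_nsmulBall (q := q) (α := α) (a := a)) (Finset.range r)
    (fun k : ℕ => ((k / r : ℝ) : UnitAddCircle))
    (add_coe_div_mem_nsmulBall_iff (β := β) (b := b) hr)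
    (c := ENNReal.ofReal (2 * a * r + q.gcd r)) fun x => by
      rw [← ENNReal.ofReal_natCast]
      exact ENNReal.ofReal_le_ofReal (card_filter_add_coe_div_mem_nsmulBall_le x ha hr)
  have havg_real : r * volume.real (nsmulBall q α a ∩ nsmulBall r β b)
      ≤ (2 * a * r + q.gcd r) * volume.real (nsmulBall r β b) := by
    have := ENNReal.toReal_mono (by finiteness) havg
    rwa [ENNReal.toReal_mul, ENNReal.toReal_mul, Finset.card_range, ENNReal.toReal_natCast,
      ENNReal.toReal_ofReal (by positivity)] at this
  refine le_of_mul_le_mul_left (havg_real.trans ?_) hr'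
  calc (2 * a * r + q.gcd r) * volume.real (nsmulBall r β b)
      ≤ (2 * a * r + q.gcd r) * (2 * b) := by gcongr
    _ = r * (4 * a * b + 2 * q.gcd r * (b / r)) := by field_simp; ring

theorem norm_sub_nsmul_le {E : Type*} [SeminormedAddCommGroup E] (x α : E) {m n : ℕ} (d : ℕ)
    (hnm : n ≤ m) :
    ‖(m - n) • α‖ ≤ n * ‖(d * m) • x - α‖ + m * ‖(d * n) • x - α‖ := by
  have hdecomp : (m - n) • α = n • ((d * m) • x - α) - m • ((d * n) • x - α) := by
    simp only [sub_nsmul _ hnm, nsmul_sub, ← mul_nsmul']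
    rw [show n * (d * m) = m * (d * n) by ring]
    abel
  rw [hdecomp]
  exact (norm_sub_le _ _).trans (add_le_add norm_nsmul_le norm_nsmul_le)

end Overlap

section ReturnCount

variable {E : Type*} [SeminormedAddCommGroup E] {θ : E} {M : ℕ} {η T δ : ℝ}

/-- The number of `m ∈ [1, M]` for which `m θ` returns to within `η` of the origin. -/
noncomputable def returnCount (θ : E) (M : ℕ) (η : ℝ) : ℕ :=
  ((Finset.Icc 1 M).filter fun m => ‖m • θ‖ < η).card

theorem returnCount_le (θ : E) (M : ℕ) (η : ℝ) : returnCount θ M η ≤ M :=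
  (Finset.card_filter_le _ _).trans_eq (by simp)

theorem returnCount_le_div_of_gap (hT : 0 < T)
    (hgap : ∀ m ∈ Finset.Icc 1 M, ‖m • θ‖ < 2 * η → T ≤ m) :
    (returnCount θ M η : ℝ) ≤ M / T := by
  have ht : 0 < ⌈T⌉₊ := Nat.ceil_pos.2 hT
  have hinj : Set.InjOn (· / ⌈T⌉₊) ((Finset.Icc 1 M).filter fun m => ‖m • θ‖ < η) := by
    suffices ∀ m ∈ Finset.Icc 1 M, ‖m • θ‖ < η → ∀ n ∈ Finset.Icc 1 M, ‖n • θ‖ < η →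
        m < n → m / ⌈T⌉₊ ≠ n / ⌈T⌉₊ by
      intro m hm n hn hmn
      rw [Finset.mem_coe, Finset.mem_filter] at hm hn
      rcases lt_trichotomy m n with h | h | h
      · exact absurd hmn (this m hm.1 hm.2 n hn.1 hn.2 h)
      · exact h
      · exact absurd hmn.symm (this n hn.1 hn.2 m hm.1 hm.2 h)
    intro m hm hmη n hn hnη hmn heq
    have hdiff : ‖(n - m) • θ‖ < 2 * η := by
      rw [sub_nsmul _ hmn.le, ← sub_eq_add_neg]
      linarith [norm_sub_le (n • θ) (m • θ)]
    rw [Finset.mem_Icc] at hm hn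
    have hle := Nat.ceil_le.2 (hgap (n - m) (Finset.mem_Icc.2 (by lia)) hdiff)
    have := Nat.div_le_div_right (c := ⌈T⌉₊) (show m + ⌈T⌉₊ ≤ n by lia)
    rw [Nat.add_div_right _ ht] at this
    lia
  have hmaps : Set.MapsTo (· / ⌈T⌉₊) ((Finset.Icc 1 M).filter fun m => ‖m • θ‖ < η)
      (Finset.Icc 1 (M / ⌈T⌉₊)) := by
    intro m hm
    rw [Finset.mem_coe, Finset.mem_filter] at hm
    obtain ⟨hmI, hmη⟩ := hm
    have hη : 0 ≤ η := (norm_nonneg _).trans hmη.le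
    have hle := Nat.ceil_le.2 (hgap m hmI (by linarith))
    rw [Finset.mem_coe, Finset.mem_Icc]
    exact ⟨Nat.div_pos hle ht, Nat.div_le_div_right (Finset.mem_Icc.1 hmI).2⟩
  calc (returnCount θ M η : ℝ) ≤ (M / ⌈T⌉₊ : ℕ) := by
        have := Finset.card_le_card_of_injOn _ hmaps hinj
        rw [Nat.card_Icc, Nat.add_sub_cancel] at this
        exact_mod_cast this
    _ ≤ M / ⌈T⌉₊ := Nat.cast_div_le
    _ ≤ M / T := by gcongr; exact Nat.le_ceil T

theorem exists_isCoprime_norm_nsmul_sub_le (θ : UnitAddCircle) (hM : 0 < M) :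
    ∃ n ∈ Finset.Icc 1 M, ∃ p : ℤ, IsCoprime p n ∧
      ∀ k ≤ n, ‖k • (θ - ((p / n : ℝ) : UnitAddCircle))‖ ≤ 1 / (M + 1) := by
  obtain ⟨t, rfl⟩ := QuotientAddGroup.mk_surjective θ
  obtain ⟨ρ, hρ, hρM⟩ := Real.exists_rat_abs_sub_le_and_den_le t hM
  refine ⟨ρ.den, Finset.mem_Icc.2 ⟨ρ.den_pos, hρM⟩, ρ.num, Rat.isCoprime_num_den ρ,
    fun k hk => norm_nsmul_le.trans ?_⟩
  rw [← Rat.cast_def]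
  calc k * ‖((t - ρ : ℝ) : UnitAddCircle)‖ ≤ ρ.den * (1 / ((M + 1) * ρ.den)) := by
        gcongr
        exact QuotientAddGroup.norm_mk_le_norm.trans hρ
    _ = 1 / (M + 1) := by field_simp

theorem card_filter_norm_add_nsmul_lt_le_of_near {θ : UnitAddCircle} {n : ℕ} {p : ℤ} {ε : ℝ}
    (hn : 0 < n) (hpn : IsCoprime p n)
    (hθ : ∀ k ≤ n, ‖k • (θ - ((p / n : ℝ) : UnitAddCircle))‖ ≤ ε) (hη : 0 ≤ η) (y : UnitAddCircle) :
    (((Finset.range n).filter fun k => ‖y + k • θ‖ < η).card : ℝ) ≤ 2 * (η + ε) * n + 1 := by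
  have hε : 0 ≤ ε := (norm_nonneg _).trans (hθ 0 n.zero_le)
  refine le_trans ?_ (card_filter_norm_add_nsmul_lt_le_of_coprime y hn hpn (add_nonneg hη hε))
  refine Nat.cast_le.2 (Finset.card_le_card fun k hk => ?_)
  rw [Finset.mem_filter, Finset.mem_range] at hk ⊢
  refine ⟨hk.1, ?_⟩
  calc ‖y + k • ((p / n : ℝ) : UnitAddCircle)‖
      = ‖y + k • θ - k • (θ - ((p / n : ℝ) : UnitAddCircle))‖ := by rw [nsmul_sub]; congr 1; abel
    _ ≤ ‖y + k • θ‖ + ‖k • (θ - ((p / n : ℝ) : UnitAddCircle))‖ := norm_sub_le _ _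
    _ < η + ε := add_lt_add_of_lt_of_le hk.2 (hθ k hk.1.le)

theorem returnCount_le_of_card_block_le {n : ℕ} {B : ℝ} (hn : 0 < n)
    (hblock : ∀ y : E, (((Finset.range n).filter fun k => ‖y + k • θ‖ < η).card : ℝ) ≤ B) :
    (returnCount θ M η : ℝ) ≤ (M / n + 1 : ℕ) * B := by
  have hshift (b : ℕ) :
      (((Finset.range n).filter fun k => ‖(b + k) • θ‖ < η).card : ℝ) ≤ B := by
    simp only [add_nsmul]
    exact hblock _
  refine le_trans ?_ (card_filter_range_mul_le (fun m => ‖m • θ‖ < η) hshift (M / n + 1))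
  unfold returnCount
  gcongr
  intro m hm
  have := Nat.lt_div_mul_add hn (a := M)
  rw [Finset.mem_Icc] at hm
  rw [Finset.mem_range, add_one_mul]
  lia

theorem exists_norm_nsmul_le_and_returnCount_le (θ : UnitAddCircle) (hM : 0 < M) (hη : 0 ≤ η) :
    ∃ n ∈ Finset.Icc 1 M, ‖n • θ‖ ≤ 1 / (M + 1) ∧
      (returnCount θ M η : ℝ) ≤ 4 * M * η + 6 * M / n := by
  obtain ⟨n, hnM, p, hpn, hnear⟩ := exists_isCoprime_norm_nsmul_sub_le θ hM
  obtain ⟨hn, hnM'⟩ := Finset.mem_Icc.1 hnM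
  have hn' : (0 : ℝ) < n := by exact_mod_cast hn
  have hM1 : (n : ℝ) ≤ M := by exact_mod_cast hnM'
  refine ⟨n, hnM, ?_, ?_⟩
  · have hperiod : n • ((p / n : ℝ) : UnitAddCircle) = 0 := by
      rw [← AddCircle.coe_nsmul, nsmul_eq_mul, mul_div_cancel₀ _ hn'.ne', AddCircle.coe_eq_zero_iff]
      exact ⟨p, by simp⟩
    simpa only [nsmul_sub, hperiod, sub_zero] using hnear n le_rfl
  have hcount := returnCount_le_of_card_block_le (M := M) hn
    (card_filter_norm_add_nsmul_lt_le_of_near hn hpn hnear hη)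
  have hblocks : ((M / n + 1 : ℕ) : ℝ) ≤ 2 * M / n := by
    have : ((M / n : ℕ) : ℝ) ≤ M / n := Nat.cast_div_le
    have : (1 : ℝ) ≤ M / n := (one_le_div hn').2 hM1
    push_cast
    rw [mul_div_assoc]
    linarith
  have hblock : 2 * (η + 1 / (M + 1)) * n + 1 ≤ 2 * n * η + 3 := by
    have : 1 / (M + 1) * n ≤ (1 : ℝ) := by
      rw [one_div_mul_eq_div, div_le_one (by positivity)]
      linarith
    linarith
  calc (returnCount θ M η : ℝ) ≤ 2 * M / n * (2 * n * η + 3) := by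
        refine hcount.trans ?_
        gcongr
    _ = 4 * M * η + 6 * M / n := by field_simp; ring

theorem returnCount_le_of_approx {θ : UnitAddCircle} (hM : 0 < M) (hη : 0 ≤ η) (hT : 0 < T)
    (hδ : 1 / (M + 1) ≤ δ ∨ 2 * η ≤ δ)
    (hθ : ∀ m ∈ Finset.Icc 1 M, ‖m • θ‖ ≤ δ → T ≤ m) :
    (returnCount θ M η : ℝ) ≤ 4 * M * η + 6 * M / T := by
  rcases hδ with hδ | hδ
  · obtain ⟨n, hn, hnorm, hcount⟩ := exists_norm_nsmul_le_and_returnCount_le θ hM hη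
    refine hcount.trans ?_
    gcongr
    exact hθ n hn (hnorm.trans hδ)
  · calc (returnCount θ M η : ℝ) ≤ M / T :=
          returnCount_le_div_of_gap hT fun m hm h => hθ m hm (h.le.trans hδ)
      _ ≤ 6 * M / T := by gcongr; linarith [Nat.cast_nonneg (α := ℝ) M]
      _ ≤ 4 * M * η + 6 * M / T := le_add_of_nonneg_left (by positivity)

end ReturnCount

section DiophantineExponent

open Asymptotics

variable {γ : ℝ}

theorem dnint_eq_norm (x : ℝ) : dnint x = ‖(x : UnitAddCircle)‖ :=
  (UnitAddCircle.norm_eq).symm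

theorem dnint_natCast_mul (m : ℕ) (x : ℝ) : dnint (m * x) = ‖m • (x : UnitAddCircle)‖ := by
  rw [dnint_eq_norm, ← nsmul_eq_mul, AddCircle.coe_nsmul]

theorem dnint_natCast_mul_pos_of_irrational (hγ : Irrational γ) {m : ℕ} (hm : m ≠ 0) :
    0 < dnint (m * γ) :=
  abs_pos.2 (sub_ne_zero.2 ((hγ.natCast_mul hm).ne_int _))

theorem sigmaExp_set_nonempty (hγ : Irrational γ) (Q : ℕ) :
    {σ : ℝ | 0 < σ ∧ ∀ q : ℕ, 2 ≤ q → q ≤ Q → (q : ℝ) ^ (-σ) ≤ dnint (q * γ)}.Nonempty := by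
  have hlarge : ∀ᶠ σ : ℝ in atTop, ∀ q ∈ Finset.Icc 2 Q, (q : ℝ) ^ (-σ) ≤ dnint (q * γ) := by
    refine (eventually_all_finset _).2 fun q hq => ?_
    have hq2 : 2 ≤ q := (Finset.mem_Icc.1 hq).1
    have htend : Tendsto (fun σ : ℝ => (q : ℝ) ^ (-σ)) atTop (nhds 0) :=
      (tendsto_rpow_atBot_of_base_gt_one _ (by exact_mod_cast hq2)).comp tendsto_neg_atTop_atBot
    exact htend.eventually_le_const (dnint_natCast_mul_pos_of_irrational hγ (by lia))
  obtain ⟨σ, hσ, hσ0⟩ := (hlarge.and (eventually_gt_atTop 0)).exists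
  exact ⟨σ, hσ0, fun q h2 hQ => hσ q (Finset.mem_Icc.2 ⟨h2, hQ⟩)⟩

theorem rpow_neg_le_norm_nsmul_of_sigmaExp_lt (hγ : Irrational γ) {Q m : ℕ} {s : ℝ}
    (hs : sigmaExp γ Q < s) (hm : 2 ≤ m) (hmQ : m ≤ Q) :
    (m : ℝ) ^ (-s) ≤ ‖m • (γ : UnitAddCircle)‖ := by
  obtain ⟨σ, ⟨-, hσ⟩, hσs⟩ := exists_lt_of_csInf_lt (sigmaExp_set_nonempty hγ Q) hs
  have hm1 : (1 : ℝ) ≤ m := by exact_mod_cast one_le_two.trans hm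
  calc (m : ℝ) ^ (-s) ≤ (m : ℝ) ^ (-σ) := rpow_le_rpow_of_exponent_le hm1 (by linarith)
    _ ≤ dnint (m * γ) := hσ m hm hmQ
    _ = ‖m • (γ : UnitAddCircle)‖ := dnint_natCast_mul m γ

theorem tendsto_logb_two_natCast : Tendsto (fun n : ℕ => logb 2 n) atTop atTop :=
  (tendsto_logb_atTop one_lt_two).comp tendsto_natCast_atTop_atTop

theorem tendsto_logb_two_logb_two_natCast :
    Tendsto (fun n : ℕ => logb 2 (logb 2 n)) atTop atTop :=
  (tendsto_logb_atTop one_lt_two).comp tendsto_logb_two_natCast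

theorem isLittleO_rpow_div_logb {β : ℝ} (hβ : β < 1) :
    (fun y : ℝ => y ^ β) =o[atTop] fun y => y / logb 2 y := by
  have hlog : (fun y : ℝ => logb 2 y) =o[atTop] fun y => y ^ (1 - β) :=
    ((isLittleO_log_rpow_atTop (sub_pos.2 hβ)).const_mul_left (log 2)⁻¹).congr_left fun y => by
      rw [logb, div_eq_inv_mul]
  have hinv := (isBigO_refl (fun y : ℝ => y) atTop).mul_isLittleO
    (hlog.inv_rev ((eventually_gt_atTop 1).mono fun y hy h =>
      absurd h (logb_pos one_lt_two hy).ne'))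
  refine hinv.congr' ?_ (.of_forall fun y => (div_eq_mul_inv _ _).symm)
  filter_upwards [eventually_gt_atTop 0] with y hy
  calc y * (y ^ (1 - β))⁻¹ = y ^ (1 : ℝ) * y ^ (-(1 - β)) := by rw [rpow_neg hy.le, rpow_one]
    _ = y ^ β := by rw [← rpow_add hy]; congr 1; ring

theorem sigmaExp_nonneg (γ : ℝ) (Q : ℕ) : 0 ≤ sigmaExp γ Q :=
  Real.sInf_nonneg fun _ hσ => hσ.1.le

theorem TamelyLiouville.sigmaExp_isLittleO (h : TamelyLiouville γ) :
    sigmaExp γ =o[atTop] fun Q : ℕ => logb 2 Q / logb 2 (logb 2 Q) := by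
  obtain ⟨ε, hε, C, -, hσ⟩ := h
  have hbound : sigmaExp γ =O[atTop] fun Q : ℕ => logb 2 Q ^ (1 / 4 - ε) := by
    refine .of_bound C ?_
    filter_upwards [eventually_ge_atTop 2] with Q hQ
    have hlog : 0 ≤ logb 2 Q := logb_nonneg one_lt_two (by exact_mod_cast one_le_two.trans hQ)
    rw [norm_of_nonneg (sigmaExp_nonneg γ Q), norm_of_nonneg (rpow_nonneg hlog _)]
    exact hσ Q hQ
  exact hbound.trans_isLittleO
    ((isLittleO_rpow_div_logb (by linarith)).comp_tendsto tendsto_logb_two_natCast)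

theorem eventually_sigmaExp_sq_lt
    (hσ : sigmaExp γ =o[atTop] fun Q : ℕ => logb 2 Q / logb 2 (logb 2 Q)) {c : ℝ} (hc : 0 < c) :
    ∀ᶠ n : ℕ in atTop, sigmaExp γ (n ^ 2) < c * logb 2 n / logb 2 (logb 2 n) := by
  have hsq : Tendsto (fun n : ℕ => n ^ 2) atTop atTop := tendsto_pow_atTop two_ne_zero
  filter_upwards [hsq.eventually (hσ.bound (half_pos hc)),
    tendsto_logb_two_natCast.eventually_gt_atTop 1,
    tendsto_logb_two_logb_two_natCast.eventually_gt_atTop 0] with n hn hx hL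
  have hlog : logb 2 ((n ^ 2 : ℕ) : ℝ) = 2 * logb 2 n := by
    rw [Nat.cast_pow, logb_pow, Nat.cast_ofNat]
  have hloglog : logb 2 (logb 2 ((n ^ 2 : ℕ) : ℝ)) = 1 + logb 2 (logb 2 n) := by
    rw [hlog, logb_mul two_ne_zero (by linarith), logb_self_eq_one one_lt_two]
  rw [hloglog, hlog, norm_of_nonneg (r := 2 * logb 2 n / _) (by positivity)] at hn
  calc sigmaExp γ (n ^ 2) ≤ c / 2 * (2 * logb 2 n / (1 + logb 2 (logb 2 n))) :=
        (le_norm_self _).trans hn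
    _ = c * logb 2 n / (1 + logb 2 (logb 2 n)) := by ring
    _ < c * logb 2 n / logb 2 (logb 2 n) := by gcongr; linarith

theorem eventually_log_pow_three_le_of_norm_nsmul_le (hγ : Irrational γ)
    (hσ : sigmaExp γ =o[atTop] fun Q : ℕ => logb 2 Q / logb 2 (logb 2 Q)) :
    ∀ᶠ n : ℕ in atTop, ∀ m ∈ Finset.Icc 1 (n ^ 2),
      ‖m • (γ : UnitAddCircle)‖ ≤ (n : ℝ) ^ (-(1 / 4) : ℝ) → logb 2 n ^ 3 ≤ m := by
  have hone : ∀ᶠ n : ℕ in atTop, (n : ℝ) ^ (-(1 / 4) : ℝ) < ‖(γ : UnitAddCircle)‖ := by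
    have htend : Tendsto (fun n : ℕ => (n : ℝ) ^ (-(1 / 4) : ℝ)) atTop (nhds 0) :=
      (tendsto_rpow_neg_atTop (by norm_num)).comp tendsto_natCast_atTop_atTop
    refine htend.eventually_lt_const ?_
    simpa only [dnint_natCast_mul, one_smul] using
      dnint_natCast_mul_pos_of_irrational hγ one_ne_zero
  filter_upwards [hone, eventually_sigmaExp_sq_lt hσ (c := 1 / 12) (by norm_num),
    tendsto_logb_two_natCast.eventually_gt_atTop 1,
    tendsto_logb_two_logb_two_natCast.eventually_gt_atTop 0, eventually_gt_atTop 0]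
    with n hn1 hs hx hL hn m hm hmn
  obtain ⟨hm1, hmn2⟩ := Finset.mem_Icc.1 hm
  have hm2 : 2 ≤ m := by
    by_contra hlt
    obtain rfl : m = 1 := by lia
    rw [one_smul] at hmn
    exact hn1.not_ge hmn
  have hm0 : (0 : ℝ) < m := by exact_mod_cast hm1
  have hn0 : (0 : ℝ) < n := by exact_mod_cast hn
  set x := logb 2 n
  set L := logb 2 x
  have hpow : -(1 / 12 * x / L) * logb 2 m ≤ -(1 / 4) * x := by
    calc -(1 / 12 * x / L) * logb 2 m = logb 2 ((m : ℝ) ^ (-(1 / 12 * x / L))) :=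
          (logb_rpow_eq_mul_logb_of_pos hm0).symm
      _ ≤ logb 2 ((n : ℝ) ^ (-(1 / 4) : ℝ)) :=
          logb_le_logb_of_le one_lt_two (by positivity)
            ((rpow_neg_le_norm_nsmul_of_sigmaExp_lt hγ hs hm2 hmn2).trans hmn)
      _ = -(1 / 4) * x := logb_rpow_eq_mul_logb_of_pos hn0
  have hlog : logb 2 (x ^ 3) ≤ logb 2 m := by
    have : 1 / 12 * x / L * (3 * L) ≤ 1 / 12 * x / L * logb 2 m := by
      calc 1 / 12 * x / L * (3 * L) = 1 / 4 * x := by field_simp; norm_num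
        _ ≤ _ := by linarith
    rw [logb_pow, Nat.cast_ofNat]
    exact le_of_mul_le_mul_left this (by positivity)
  exact (logb_le_logb one_lt_two (by positivity) hm0).1 hlog

theorem eventually_returnCount_le (hγ : Irrational γ)
    (hσ : sigmaExp γ =o[atTop] fun Q : ℕ => logb 2 Q / logb 2 (logb 2 Q)) (C : ℝ) :
    ∀ᶠ n : ℕ in atTop, ∀ M ∈ Finset.Icc 1 (n ^ 2), ∀ a : ℝ, 0 ≤ a → a ≤ C / n →
      (returnCount (γ : UnitAddCircle) M (2 * M * a) : ℝ)
        ≤ 8 * M ^ 2 * a + 6 * M / logb 2 n ^ 3 := by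
  have hsqrt : ∀ᶠ n : ℕ in atTop, 4 * C ≤ (n : ℝ) ^ (1 / 2 : ℝ) :=
    ((tendsto_rpow_atTop (by norm_num)).comp tendsto_natCast_atTop_atTop).eventually_ge_atTop _
  filter_upwards [eventually_log_pow_three_le_of_norm_nsmul_le hγ hσ, hsqrt,
    tendsto_logb_two_natCast.eventually_gt_atTop 0, eventually_gt_atTop 0]
    with n hreturn hC hx hn M hM a ha haC
  obtain ⟨hM1, hMn⟩ := Finset.mem_Icc.1 hM
  have hn0 : (0 : ℝ) < n := by exact_mod_cast hn
  have hscale : 1 / (M + 1 : ℝ) ≤ (n : ℝ) ^ (-(1 / 4) : ℝ) ∨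
      2 * (2 * M * a) ≤ (n : ℝ) ^ (-(1 / 4) : ℝ) := by
    refine or_iff_not_imp_left.2 fun hM_small => ?_
    have hMle : (M : ℝ) ≤ (n : ℝ) ^ (1 / 4 : ℝ) := by
      rw [not_le, rpow_neg hn0.le, ← one_div, one_div_lt_one_div (by positivity) (by positivity)]
        at hM_small
      linarith
    calc 2 * (2 * M * a) = M * (4 * a) := by ring
      _ ≤ (n : ℝ) ^ (1 / 4 : ℝ) * (4 * (C / n)) := by gcongr
      _ = 4 * C * ((n : ℝ) ^ (1 / 4 : ℝ) * (n : ℝ) ^ (-1 : ℝ)) := by rw [rpow_neg_one]; ring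
      _ ≤ (n : ℝ) ^ (1 / 2 : ℝ) * ((n : ℝ) ^ (1 / 4 : ℝ) * (n : ℝ) ^ (-1 : ℝ)) := by gcongr
      _ = (n : ℝ) ^ (-(1 / 4) : ℝ) := by rw [← rpow_add hn0, ← rpow_add hn0]; norm_num
  calc (returnCount (γ : UnitAddCircle) M (2 * M * a) : ℝ)
      ≤ 4 * M * (2 * M * a) + 6 * M / logb 2 n ^ 3 :=
        returnCount_le_of_approx hM1 (by positivity) (by positivity) hscale fun m hm =>
          hreturn m (Finset.Icc_subset_Icc_right hMn hm)
    _ = 8 * M ^ 2 * a + 6 * M / logb 2 n ^ 3 := by ring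

end DiophantineExponent

section DivisorSums

theorem log_le_logb_two {x : ℝ} (hx : 1 ≤ x) : log x ≤ logb 2 x := by
  rw [logb, le_div_iff₀ (log_pos one_lt_two)]
  have : log 2 ≤ 1 := by linarith [log_le_sub_one_of_pos (x := 2) two_pos]
  exact mul_le_of_le_one_right (log_nonneg hx) this

theorem sum_inv_le_one_add_log_add {S : Finset ℕ} (hS : ∀ d ∈ S, 0 < d) {T : ℝ} (hT : 1 ≤ T) :
    ∑ d ∈ S, (d : ℝ)⁻¹ ≤ 1 + log T + S.card / T := by
  have hsmall : ∑ d ∈ S with d ≤ ⌊T⌋₊, (d : ℝ)⁻¹ ≤ 1 + log T := by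
    refine le_trans ?_ (harmonic_floor_le_one_add_log T hT)
    rw [harmonic_eq_sum_Icc]
    push_cast
    refine Finset.sum_le_sum_of_subset_of_nonneg (fun d hd => ?_) fun d _ _ => by positivity
    rw [Finset.mem_filter] at hd
    exact Finset.mem_Icc.2 ⟨hS d hd.1, hd.2⟩
  have hlarge : ∑ d ∈ S with ¬ d ≤ ⌊T⌋₊, (d : ℝ)⁻¹ ≤ S.card / T := by
    calc ∑ d ∈ S with ¬ d ≤ ⌊T⌋₊, (d : ℝ)⁻¹ ≤ (S.filter fun d => ¬ d ≤ ⌊T⌋₊).card • T⁻¹ := by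
          refine Finset.sum_le_card_nsmul _ _ _ fun d hd => ?_
          rw [Finset.mem_filter, not_le] at hd
          have := (Nat.floor_lt (by linarith)).1 hd.2
          gcongr
      _ ≤ S.card / T := by
          rw [nsmul_eq_mul, ← div_eq_mul_inv]
          gcongr
          exact Finset.filter_subset _ _
  rw [← Finset.sum_filter_add_sum_filter_not S (· ≤ ⌊T⌋₊)]
  exact add_le_add hsmall hlarge

theorem sum_card_divisors_le (N : ℕ) :
    ∑ q ∈ Finset.Ioc 0 N, (q.divisors.card : ℝ) ≤ N * (1 + log N) := by
  have hsum : ∑ q ∈ Finset.Ioc 0 N, q.divisors.card = ∑ d ∈ Finset.Ioc 0 N, N / d := by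
    simpa only [ArithmeticFunction.sigma_zero_apply] using
      ArithmeticFunction.sum_Ioc_sigma0_eq_sum_div N
  calc ∑ q ∈ Finset.Ioc 0 N, (q.divisors.card : ℝ) = ∑ d ∈ Finset.Ioc 0 N, ((N / d : ℕ) : ℝ) := by
        exact_mod_cast hsum
    _ ≤ ∑ d ∈ Finset.Icc 1 N, N * (d : ℝ)⁻¹ := Finset.sum_le_sum fun d _ => Nat.cast_div_le
    _ = N * (harmonic N : ℚ) := by rw [← Finset.mul_sum, harmonic_eq_sum_Icc]; push_cast; rfl
    _ ≤ N * (1 + log N) := by gcongr; exact harmonic_le_one_add_log N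

theorem summable_of_sum_Ico_two_pow_le {f g : ℕ → ℝ} (hf : ∀ n, 0 ≤ f n) (hg : Summable g)
    (h : ∀ k, ∑ q ∈ Finset.Ico (2 ^ k) (2 ^ (k + 1)), f q ≤ g k) : Summable f := by
  have hdyadic (n : ℕ) :
      ∑ q ∈ Finset.range (2 ^ n), f q ≤ f 0 + ∑ k ∈ Finset.range n, g k := by
    induction n with
    | zero => simp
    | succ n ih =>
      rw [Finset.sum_range_succ, ← Finset.sum_range_add_sum_Ico f
        (Nat.pow_le_pow_right two_pos n.le_succ)]
      linarith [h n]
  have hg0 (k : ℕ) : 0 ≤ g k := (Finset.sum_nonneg fun q _ => hf q).trans (h k)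
  refine summable_of_sum_range_le (c := f 0 + ∑' k, g k) hf fun n => ?_
  calc ∑ q ∈ Finset.range n, f q ≤ ∑ q ∈ Finset.range (2 ^ n), f q :=
        Finset.sum_le_sum_of_subset_of_nonneg
          (Finset.range_mono Nat.lt_two_pow_self.le) fun q _ _ => hf q
    _ ≤ f 0 + ∑ k ∈ Finset.range n, g k := hdyadic n
    _ ≤ f 0 + ∑' k, g k := by gcongr; exact hg.sum_le_tsum _ fun k _ => hg0 k

/-- The summable weight `τ(n) / (n (log₂ n)³)`: indices `n` at which `ψ n` lies below it do not
affect the divergence of `∑ ψ`, and at the others `ψ n` controls sums over the divisors of `n`. -/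
noncomputable def divisorWeight (n : ℕ) : ℝ :=
  (n.divisors.card : ℝ) / (n * logb 2 n ^ 3)

theorem sum_Ico_two_pow_divisorWeight_le (k : ℕ) :
    ∑ q ∈ Finset.Ico (2 ^ k) (2 ^ (k + 1)), divisorWeight q ≤ 6 / (k : ℝ) ^ 2 := by
  rcases k.eq_zero_or_pos with rfl | hk
  · simp [divisorWeight]
  have hk1 : (1 : ℝ) ≤ k := by exact_mod_cast hk
  have hterm : ∀ q ∈ Finset.Ico (2 ^ k) (2 ^ (k + 1)),
      divisorWeight q ≤ q.divisors.card / (2 ^ k * k ^ 3) := by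
    intro q hq
    have hq : (2 : ℝ) ^ k ≤ q := by exact_mod_cast (Finset.mem_Ico.1 hq).1
    have hlog : (k : ℝ) ≤ logb 2 q := by
      rw [le_logb_iff_rpow_le one_lt_two (by linarith [pow_pos (two_pos (α := ℝ)) k])]
      exact_mod_cast hq
    unfold divisorWeight
    gcongr
  have hblock : ∑ q ∈ Finset.Ico (2 ^ k) (2 ^ (k + 1)), (q.divisors.card : ℝ)
      ≤ 2 ^ (k + 1) * (3 * k) := by
    have hlog : log ((2 ^ (k + 1) : ℕ) : ℝ) ≤ k + 1 := by
      refine (log_le_logb_two (by exact_mod_cast Nat.one_le_two_pow)).trans_eq ?_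
      rw [Nat.cast_pow, Nat.cast_ofNat, logb_pow, logb_self_eq_one one_lt_two]
      push_cast
      ring
    calc ∑ q ∈ Finset.Ico (2 ^ k) (2 ^ (k + 1)), (q.divisors.card : ℝ)
        ≤ ∑ q ∈ Finset.Ioc 0 (2 ^ (k + 1)), (q.divisors.card : ℝ) := by
          refine Finset.sum_le_sum_of_subset_of_nonneg (fun q hq => ?_) fun q _ _ => by positivity
          have := Nat.two_pow_pos k
          rw [Finset.mem_Ico] at hq
          exact Finset.mem_Ioc.2 (by lia)
      _ ≤ (2 ^ (k + 1) : ℕ) * (1 + log (2 ^ (k + 1) : ℕ)) := sum_card_divisors_le _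
      _ ≤ 2 ^ (k + 1) * (3 * k) := by push_cast at hlog ⊢; gcongr; linarith
  calc ∑ q ∈ Finset.Ico (2 ^ k) (2 ^ (k + 1)), divisorWeight q
      ≤ ∑ q ∈ Finset.Ico (2 ^ k) (2 ^ (k + 1)), (q.divisors.card : ℝ) / (2 ^ k * k ^ 3) :=
        Finset.sum_le_sum hterm
    _ ≤ (2 ^ (k + 1) * (3 * k) : ℝ) / (2 ^ k * k ^ 3) := by rw [← Finset.sum_div]; gcongr
    _ = 6 / (k : ℝ) ^ 2 := by field_simp; ring

theorem divisorWeight_nonneg (q : ℕ) : 0 ≤ divisorWeight q := by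
  have : 0 ≤ logb 2 q := by
    rcases q.eq_zero_or_pos with rfl | hq
    · simp
    · exact logb_nonneg one_lt_two (by exact_mod_cast hq)
  unfold divisorWeight
  positivity

theorem summable_divisorWeight : Summable divisorWeight :=
  summable_of_sum_Ico_two_pow_le divisorWeight_nonneg
    ((summable_one_div_nat_pow.2 one_lt_two).mul_left 6) fun k =>
      (sum_Ico_two_pow_divisorWeight_le k).trans_eq (mul_one_div _ _).symm

end DivisorSums

section Admissible

/-- The number of returns `‖m • θ‖ < 2Ma` with `m ≤ M`, divided by `M²`: the total weight of the
resonances of ratio about `M` between balls of radius at most `a`. -/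
noncomputable def returnDensity (θ : UnitAddCircle) (a : ℝ) (M : ℕ) : ℝ :=
  returnCount θ M (2 * M * a) / (M : ℝ) ^ 2

theorem returnDensity_nonneg (θ : UnitAddCircle) (a : ℝ) (M : ℕ) : 0 ≤ returnDensity θ a M := by
  unfold returnDensity
  positivity

theorem returnDensity_le_inv (θ : UnitAddCircle) (a : ℝ) (M : ℕ) :
    returnDensity θ a M ≤ (M : ℝ)⁻¹ := by
  have hle : (returnCount θ M (2 * M * a) : ℝ) ≤ M := by exact_mod_cast returnCount_le _ _ _
  calc returnDensity θ a M ≤ M / (M : ℝ) ^ 2 := by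
        unfold returnDensity
        gcongr
    _ = (M : ℝ)⁻¹ := by rw [sq, div_self_mul_self']

theorem sum_Ico_returnDensity_two_pow_mul_le (θ : UnitAddCircle) (a : ℝ) (k i j : ℕ) :
    ∑ l ∈ Finset.Ico i j, returnDensity θ a (2 ^ l * k) ≤ 2 / (k * 2 ^ i) := by
  calc ∑ l ∈ Finset.Ico i j, returnDensity θ a (2 ^ l * k)
      ≤ ∑ l ∈ Finset.Ico i j, (k : ℝ)⁻¹ * (1 / 2) ^ l := by
        refine Finset.sum_le_sum fun l _ => (returnDensity_le_inv θ a _).trans_eq ?_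
        rw [Nat.cast_mul, mul_inv, Nat.cast_pow, Nat.cast_ofNat, one_div, inv_pow, mul_comm]
    _ ≤ (k : ℝ)⁻¹ * ((1 / 2) ^ i / (1 - 1 / 2)) := by
        rw [← Finset.mul_sum]
        gcongr
        exact geom_sum_Ico_le_of_lt_one (by norm_num) (by norm_num)
    _ = 2 / (k * 2 ^ i) := by
        rw [one_div_pow]
        ring

/-- The indices kept in the argument: `ψ n` obeys the size bound, dominates `divisorWeight n`, and
the multiples of `θ` return to the origin about as often as expected at every scale `M ≤ n²`. -/
structure IsAdmissible (θ : UnitAddCircle) (C : ℝ) (ψ : ℕ → ℝ) (n : ℕ) : Prop where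
  lt_half : ψ n < 1 / 2
  two_le_log : 2 ≤ logb 2 n
  log_pow_three_le : logb 2 n ^ 3 ≤ n
  le_div : ψ n ≤ C / (n * logb 2 (logb 2 n) ^ 2)
  divisorWeight_le : divisorWeight n ≤ ψ n
  returnDensity_le : ∀ M ∈ Finset.Icc 1 (n ^ 2),
    returnDensity θ (ψ n) M ≤ 8 * ψ n + 6 / (M * logb 2 n ^ 3)

namespace IsAdmissible

variable {θ : UnitAddCircle} {C : ℝ} {ψ : ℕ → ℝ} {n : ℕ}

theorem index_pos (h : IsAdmissible θ C ψ n) : 0 < n := by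
  refine Nat.pos_of_ne_zero ?_
  rintro rfl
  have := h.two_le_log
  norm_num at this

theorem one_le_loglog (h : IsAdmissible θ C ψ n) : 1 ≤ logb 2 (logb 2 n) := by
  have hx := h.two_le_log
  rw [le_logb_iff_rpow_le one_lt_two (by linarith), rpow_one]
  exact hx

theorem card_divisors_le (h : IsAdmissible θ C ψ n) :
    (n.divisors.card : ℝ) ≤ ψ n * (n * logb 2 n ^ 3) := by
  have hx := h.two_le_log
  have hn : (0 : ℝ) < n := by exact_mod_cast h.index_pos
  have := h.divisorWeight_le
  rwa [divisorWeight, div_le_iff₀ (by positivity)] at this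

theorem pos (h : IsAdmissible θ C ψ n) : 0 < ψ n := by
  have hx := h.two_le_log
  have hn : (0 : ℝ) < n := by exact_mod_cast h.index_pos
  have hτ : (0 : ℝ) < n.divisors.card := by
    exact_mod_cast Finset.card_pos.2 ⟨1, Nat.one_mem_divisors.2 h.index_pos.ne'⟩
  exact pos_of_mul_pos_left (hτ.trans_le h.card_divisors_le) (by positivity)

theorem mul_loglog_sq_le (h : IsAdmissible θ C ψ n) : n * ψ n * logb 2 (logb 2 n) ^ 2 ≤ C := by
  have hL := h.one_le_loglog
  have hn : (0 : ℝ) < n := by exact_mod_cast h.index_pos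
  have := h.le_div
  rw [le_div_iff₀ (by positivity)] at this
  linarith

theorem const_pos (h : IsAdmissible θ C ψ n) : 0 < C := by
  have hL := h.one_le_loglog
  have hn : (0 : ℝ) < n := by exact_mod_cast h.index_pos
  have hψ := h.pos
  exact lt_of_lt_of_le (by positivity) h.mul_loglog_sq_le

theorem sum_inv_divisors_le (h : IsAdmissible θ C ψ n) :
    ∑ d ∈ n.divisors, (d : ℝ)⁻¹ ≤ (4 + C) * logb 2 (logb 2 n) := by
  have hx := h.two_le_log
  have hL := h.one_le_loglog
  have hψ := h.pos
  have hx3 : 1 ≤ logb 2 n ^ 3 := one_le_pow₀ (by linarith)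
  have hlog : log (logb 2 n ^ 3) ≤ 3 * logb 2 (logb 2 n) :=
    (log_le_logb_two hx3).trans_eq (by rw [logb_pow, Nat.cast_ofNat])
  have hcard : n.divisors.card / logb 2 n ^ 3 ≤ C := by
    rw [div_le_iff₀ (by positivity)]
    calc (n.divisors.card : ℝ) ≤ n * ψ n * logb 2 n ^ 3 := h.card_divisors_le.trans_eq (by ring)
      _ ≤ C * logb 2 n ^ 3 := by
        gcongr
        exact (le_mul_of_one_le_right (by positivity) (one_le_pow₀ hL)).trans h.mul_loglog_sq_le
  have hsum := sum_inv_le_one_add_log_add (S := n.divisors)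
    (fun d hd => Nat.pos_of_mem_divisors hd) hx3
  have hC : C ≤ C * logb 2 (logb 2 n) := le_mul_of_one_le_right h.const_pos.le hL
  linarith

theorem exists_two_pow_near (h : IsAdmissible θ C ψ n) :
    ∃ J : ℕ, (J : ℝ) ≤ 4 * logb 2 (logb 2 n) ∧ logb 2 n ^ 3 ≤ 2 ^ J ∧
      ∀ i < J, (2 : ℝ) ^ i ≤ logb 2 n ^ 3 := by
  have hx := h.two_le_log
  have hL := h.one_le_loglog
  obtain ⟨j, hj, hj'⟩ := exists_nat_pow_near
    (one_le_pow₀ (by linarith) : 1 ≤ logb 2 n ^ 3) (one_lt_two (α := ℝ))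
  refine ⟨j + 1, ?_, hj'.le, fun i hi => ?_⟩
  · have hjlog := logb_le_logb_of_le one_lt_two (by positivity) hj
    rw [logb_pow, logb_pow, logb_self_eq_one one_lt_two, Nat.cast_ofNat] at hjlog
    push_cast
    linarith
  · exact (pow_le_pow_right₀ one_le_two (Nat.lt_succ_iff.1 hi)).trans hj

theorem sum_range_returnDensity_two_pow_mul_le (h : IsAdmissible θ C ψ n) {k : ℕ}
    (hk : k ∈ Finset.Icc 1 n) {J : ℕ} (hJ : ∀ i < J, (2 : ℝ) ^ i ≤ logb 2 n ^ 3) :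
    ∑ i ∈ Finset.range J, returnDensity θ (ψ n) (2 ^ i * k)
      ≤ J * (8 * ψ n) + 12 / (k * logb 2 n ^ 3) := by
  obtain ⟨hk1, hkn⟩ := Finset.mem_Icc.1 hk
  have hx3 : 0 < logb 2 n ^ 3 := pow_pos (by linarith [h.two_le_log]) 3
  have hterm : ∀ i ∈ Finset.range J, returnDensity θ (ψ n) (2 ^ i * k)
      ≤ 8 * ψ n + 6 / (k * logb 2 n ^ 3) * (1 / 2) ^ i := by
    intro i hi
    have hin : 2 ^ i ≤ n := by
      exact_mod_cast (hJ i (Finset.mem_range.1 hi)).trans h.log_pow_three_le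
    have hM : 2 ^ i * k ∈ Finset.Icc 1 (n ^ 2) :=
      Finset.mem_Icc.2 ⟨Nat.mul_pos (Nat.two_pow_pos i) hk1,
        (Nat.mul_le_mul hin hkn).trans_eq (sq n).symm⟩
    refine (h.returnDensity_le _ hM).trans_eq ?_
    rw [one_div_pow]
    push_cast
    ring
  calc ∑ i ∈ Finset.range J, returnDensity θ (ψ n) (2 ^ i * k)
      ≤ J * (8 * ψ n) + 6 / (k * logb 2 n ^ 3) * ∑ i ∈ Finset.range J, (1 / 2 : ℝ) ^ i := by
        rw [Finset.mul_sum]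
        refine (Finset.sum_le_sum hterm).trans_eq ?_
        rw [Finset.sum_add_distrib, Finset.sum_const, Finset.card_range, nsmul_eq_mul]
    _ ≤ J * (8 * ψ n) + 6 / (k * logb 2 n ^ 3) * 2 := by
        gcongr
        exact sum_geometric_two_le J
    _ = _ := by ring

theorem sum_returnDensity_two_pow_mul_le (h : IsAdmissible θ C ψ n) {k : ℕ}
    (hk : k ∈ Finset.Icc 1 n) (I : ℕ) :
    ∑ i ∈ Finset.range I, returnDensity θ (ψ n) (2 ^ i * k)
      ≤ 32 * logb 2 (logb 2 n) * ψ n + 14 / (k * logb 2 n ^ 3) := by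
  have hk0 : (0 : ℝ) < k := by exact_mod_cast (Finset.mem_Icc.1 hk).1
  have hx3 : 0 < logb 2 n ^ 3 := pow_pos (by linarith [h.two_le_log]) 3
  have hψ := h.pos
  obtain ⟨J, hJ, hJx, hJlt⟩ := h.exists_two_pow_near
  calc ∑ i ∈ Finset.range I, returnDensity θ (ψ n) (2 ^ i * k)
      ≤ ∑ i ∈ Finset.range (max I J), returnDensity θ (ψ n) (2 ^ i * k) :=
        Finset.sum_le_sum_of_subset_of_nonneg (Finset.range_mono (le_max_left I J))
          fun i _ _ => returnDensity_nonneg _ _ _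
    _ = ∑ i ∈ Finset.range J, returnDensity θ (ψ n) (2 ^ i * k)
        + ∑ i ∈ Finset.Ico J (max I J), returnDensity θ (ψ n) (2 ^ i * k) :=
        (Finset.sum_range_add_sum_Ico _ (le_max_right I J)).symm
    _ ≤ (J * (8 * ψ n) + 12 / (k * logb 2 n ^ 3)) + 2 / (k * 2 ^ J) :=
        add_le_add (h.sum_range_returnDensity_two_pow_mul_le hk hJlt)
          (sum_Ico_returnDensity_two_pow_mul_le _ _ _ _ _)
    _ ≤ (4 * logb 2 (logb 2 n) * (8 * ψ n) + 12 / (k * logb 2 n ^ 3))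
        + 2 / (k * logb 2 n ^ 3) := by gcongr
    _ = _ := by ring

end IsAdmissible

end Admissible

section Resonance

variable {θ : UnitAddCircle} {a b C : ℝ} {ψ : ℕ → ℝ} {m n d : ℕ}

/-- The condition `‖(|m - n| / d) • θ‖ < 2 (max m n / d) a` with `d = gcd m n`, necessary for the
balls `nsmulBall m θ a` and `nsmulBall n θ a` with `m ≠ n` to meet. -/
def IsResonant (θ : UnitAddCircle) (a : ℝ) (m n : ℕ) : Prop :=
  m ≠ n ∧ ‖(Nat.dist m n / m.gcd n) • θ‖ < 2 * ↑(max m n / m.gcd n) * a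

theorem isResonant_comm : IsResonant θ a m n ↔ IsResonant θ a n m := by
  rw [IsResonant, IsResonant, Nat.dist_comm, Nat.gcd_comm, max_comm, ne_comm]

theorem nat_sub_div_of_dvd {k : ℕ} (h : k ∣ n) : (m - n) / k = m / k - n / k := by
  rcases k.eq_zero_or_pos with rfl | hk
  · simp only [Nat.div_zero]
  · obtain ⟨l, rfl⟩ := h
    rw [Nat.sub_mul_div, Nat.mul_div_cancel_left l hk]

theorem isResonant_of_nsmulBall_inter_nonempty (hmn : m ≠ n)
    (h : (nsmulBall m θ a ∩ nsmulBall n θ b).Nonempty) : IsResonant θ (max a b) m n := by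
  wlog hnm : n < m generalizing m n a b
  · rw [isResonant_comm, max_comm]
    exact this hmn.symm (by rwa [Set.inter_comm]) (hmn.lt_or_gt.resolve_right hnm)
  obtain ⟨x, hxm, hxn⟩ := h
  rw [mem_nsmulBall] at hxm hxn
  refine ⟨hmn, ?_⟩
  obtain ⟨hm, hn⟩ := (⟨m.gcd_dvd_left n, m.gcd_dvd_right n⟩ : m.gcd n ∣ m ∧ m.gcd n ∣ n)
  rw [Nat.dist_eq_sub_of_le_right hnm.le, max_eq_left hnm.le, nat_sub_div_of_dvd hn]
  rw [← Nat.mul_div_cancel' hm] at hxm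
  rw [← Nat.mul_div_cancel' hn] at hxn
  set m' := m / m.gcd n
  set n' := n / m.gcd n
  have hm' : 0 < m' := Nat.div_pos (Nat.le_of_dvd (by lia) hm) (Nat.gcd_pos_of_pos_left n (by lia))
  have hnm' : n' ≤ m' := Nat.div_le_div_right hnm.le
  have hmax : 0 ≤ max a b := (norm_nonneg _).trans (hxm.le.trans (le_max_left a b))
  calc ‖(m' - n') • θ‖ ≤ n' * _ + m' * _ := norm_sub_nsmul_le x θ (m.gcd n) hnm'
    _ < n' * max a b + m' * max a b := by
      refine add_lt_add_of_le_of_lt ?_ ?_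
      · gcongr
        exact hxm.le.trans (le_max_left a b)
      · gcongr
        exact hxn.trans_le (le_max_right a b)
    _ ≤ m' * max a b + m' * max a b := by gcongr
    _ = 2 * m' * max a b := by ring

open scoped Classical in
/-- A bound for the excess of `volume (A m ∩ A n)` over `volume (A m) * volume (A n)`, where
`A q = nsmulBall q θ (ψ q)` and `ψ m ≤ ψ n`. -/
noncomputable def resonanceWeight (θ : UnitAddCircle) (C : ℝ) (ψ : ℕ → ℝ) (n m : ℕ) : ℝ :=
  if IsResonant θ (ψ n) m n then
    2 * C * m.gcd n / (max m n * logb 2 (logb 2 n)) ^ 2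
  else 0

theorem resonanceWeight_nonneg (hC : 0 ≤ C) : 0 ≤ resonanceWeight θ C ψ n m := by
  unfold resonanceWeight
  split_ifs <;> positivity

namespace IsAdmissible

theorem volume_real_nsmulBall (h : IsAdmissible θ C ψ n) :
    volume.real (nsmulBall n θ (ψ n)) = 2 * ψ n :=
  _root_.volume_real_nsmulBall h.index_pos h.pos.le h.lt_half.le

theorem div_le (h : IsAdmissible θ C ψ n) : ψ n / n ≤ C / (n * logb 2 (logb 2 n)) ^ 2 := by
  have hn : (0 : ℝ) < n := by exact_mod_cast h.index_pos
  rw [div_le_iff₀ hn]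
  exact h.le_div.trans_eq (by field_simp)

theorem volume_real_inter_le_add (hm : IsAdmissible θ C ψ m) (hn : IsAdmissible θ C ψ n) :
    volume.real (nsmulBall m θ (ψ m) ∩ nsmulBall n θ (ψ n))
      ≤ volume.real (nsmulBall m θ (ψ m)) * volume.real (nsmulBall n θ (ψ n))
        + 2 * C * m.gcd n / (max m n * logb 2 (logb 2 n)) ^ 2 := by
  have hm0 : (0 : ℝ) < m := by exact_mod_cast hm.index_pos
  have hL : 0 < logb 2 (logb 2 n) := one_pos.trans_le hn.one_le_loglog
  have hC := hn.const_pos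
  rw [hm.volume_real_nsmulBall, hn.volume_real_nsmulBall]
  rcases le_total m n with hmn | hnm
  · rw [max_eq_right hmn]
    calc _ ≤ 4 * ψ m * ψ n + 2 * m.gcd n * (ψ n / n) :=
          volume_real_nsmulBall_inter_le hm.pos.le hn.pos.le hn.index_pos
      _ ≤ 4 * ψ m * ψ n + 2 * m.gcd n * (C / (n * logb 2 (logb 2 n)) ^ 2) := by
          gcongr _ + _ * ?_
          exact hn.div_le
      _ = _ := by ring
  · have hdiv : ψ m / m ≤ C / (m * logb 2 (logb 2 n)) ^ 2 := by
      have hx := hn.two_le_log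
      have hn0 := hn.index_pos
      refine hm.div_le.trans ?_
      gcongr <;> norm_num
    rw [max_eq_left hnm, Set.inter_comm, Nat.gcd_comm]
    calc _ ≤ 4 * ψ n * ψ m + 2 * n.gcd m * (ψ m / m) :=
          volume_real_nsmulBall_inter_le hn.pos.le hm.pos.le hm.index_pos
      _ ≤ 4 * ψ n * ψ m + 2 * n.gcd m * (C / (m * logb 2 (logb 2 n)) ^ 2) := by
          gcongr
      _ = _ := by ring

theorem volume_real_inter_le_add_resonanceWeight (hm : IsAdmissible θ C ψ m)
    (hn : IsAdmissible θ C ψ n) (hmn : m ≠ n) :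
    volume.real (nsmulBall m θ (ψ m) ∩ nsmulBall n θ (ψ n))
      ≤ volume.real (nsmulBall m θ (ψ m)) * volume.real (nsmulBall n θ (ψ n))
        + (resonanceWeight θ C ψ m n + resonanceWeight θ C ψ n m) := by
  wlog hψ : ψ m ≤ ψ n generalizing m n
  · rw [Set.inter_comm, mul_comm, add_comm (resonanceWeight _ _ _ _ _)]
    exact this hn hm hmn.symm (not_le.1 hψ).le
  have hC := hn.const_pos.le
  rcases Set.eq_empty_or_nonempty (nsmulBall m θ (ψ m) ∩ nsmulBall n θ (ψ n)) with hempty | hne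
  · rw [hempty, measureReal_empty]
    exact add_nonneg (by positivity)
      (add_nonneg (resonanceWeight_nonneg hC) (resonanceWeight_nonneg hC))
  · have hres := isResonant_of_nsmulBall_inter_nonempty hmn hne
    rw [max_eq_right hψ] at hres
    refine (hm.volume_real_inter_le_add hn).trans ?_
    rw [resonanceWeight.eq_def θ C ψ n m, if_pos hres]
    gcongr
    exact le_add_of_nonneg_left (resonanceWeight_nonneg hC)

end IsAdmissible

theorem max_le_two_pow_size_div_mul (hn : 0 < n) (m : ℕ) : max m n ≤ 2 ^ (m / n).size * n := by
  refine max_le ?_ (Nat.le_mul_of_pos_left n (Nat.two_pow_pos _))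
  exact ((Nat.div_lt_iff_lt_mul hn).1 (Nat.lt_size_self _)).le

theorem two_pow_size_div_mul_le (m n : ℕ) : 2 ^ (m / n).size * n ≤ 2 * max m n := by
  rcases h : (m / n).size with - | i
  · lia
  · have hi : 2 ^ i ≤ m / n := Nat.lt_size.1 (by lia)
    calc 2 ^ (i + 1) * n = 2 * (2 ^ i * n) := by ring
      _ ≤ 2 * (m / n * n) := by gcongr
      _ ≤ 2 * max m n := by
        gcongr
        exact (Nat.div_mul_le_self m n).trans (le_max_left m n)

theorem resonanceWeight_le (hC : 0 ≤ C) (hn : 0 < n) {M : ℕ} (hM : 0 < M)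
    (hmn : M * m.gcd n ≤ 2 * max m n) :
    resonanceWeight θ C ψ n m ≤ 8 * C / (m.gcd n * logb 2 (logb 2 n) ^ 2) / (M : ℝ) ^ 2 := by
  rw [resonanceWeight]
  split_ifs
  · calc 2 * C * m.gcd n / (max m n * logb 2 (logb 2 n)) ^ 2
        = 8 * C / logb 2 (logb 2 n) ^ 2 * (m.gcd n / (2 * max m n : ℕ) ^ 2) := by
          push_cast
          ring
      _ ≤ 8 * C / logb 2 (logb 2 n) ^ 2 * (m.gcd n / (M * m.gcd n : ℕ) ^ 2) := by
          gcongr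
      _ = 8 * C / (m.gcd n * logb 2 (logb 2 n) ^ 2) / (M : ℝ) ^ 2 := by
          push_cast
          field_simp
  · positivity

theorem size_div_eq_zero_iff (hn : 0 < n) : (m / n).size = 0 ↔ m < n := by
  rw [Nat.size_eq_zero, Nat.div_eq_zero_iff_lt hn]

theorem gcd_dvd_dist (m n : ℕ) : m.gcd n ∣ Nat.dist m n :=
  dvd_add (Nat.dvd_sub (m.gcd_dvd_left n) (m.gcd_dvd_right n))
    (Nat.dvd_sub (m.gcd_dvd_right n) (m.gcd_dvd_left n))

open scoped Classical in
theorem card_isResonant_fiber_le (hn : 0 < n) (ha : 0 ≤ a) (S : Finset ℕ) (d i : ℕ) :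
    (S.filter fun m => (m.gcd n, (m / n).size) = (d, i) ∧ IsResonant θ a m n).card
      ≤ returnCount θ (2 ^ i * (n / d)) (2 * ↑(2 ^ i * (n / d)) * a) := by
  refine Finset.card_le_card_of_injOn (fun m => Nat.dist m n / d) (fun m hm => ?_) ?_
  · obtain ⟨-, hfib, hmn, hnorm⟩ := Finset.mem_filter.1 hm
    obtain ⟨rfl, rfl⟩ := Prod.mk.inj hfib
    have hmax : max m n / m.gcd n ≤ 2 ^ (m / n).size * (n / m.gcd n) := by
      rw [← Nat.mul_div_assoc _ (m.gcd_dvd_right n)]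
      exact Nat.div_le_div_right (max_le_two_pow_size_div_mul hn m)
    refine Finset.mem_filter.2 ⟨Finset.mem_Icc.2 ⟨?_, le_trans ?_ hmax⟩, hnorm.trans_le ?_⟩
    · exact Nat.div_pos (Nat.le_of_dvd (Nat.dist_pos_of_ne hmn) (gcd_dvd_dist m n))
        (Nat.gcd_pos_of_pos_right m hn)
    · exact Nat.div_le_div_right (by unfold Nat.dist; lia)
    · gcongr
  · intro m hm m' hm' heq
    obtain ⟨-, hfib, -⟩ := Finset.mem_filter.1 hm
    obtain ⟨-, hfib', -⟩ := Finset.mem_filter.1 hm'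
    obtain ⟨hd, hi⟩ := Prod.mk.inj hfib
    obtain ⟨hd', hi'⟩ := Prod.mk.inj hfib'
    have hdist : Nat.dist m n = Nat.dist m' n :=
      (Nat.div_left_inj (hd ▸ gcd_dvd_dist m n) (hd' ▸ gcd_dvd_dist m' n)).1 heq
    have hlt : m < n ↔ m' < n := by
      rw [← size_div_eq_zero_iff hn, ← size_div_eq_zero_iff hn]
      exact (hi.trans hi'.symm).congr_left
    unfold Nat.dist at hdist
    lia

theorem sum_fiber_resonanceWeight_le (hC : 0 ≤ C) (hn : 0 < n) (hψ : 0 ≤ ψ n)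
    (S : Finset ℕ) (d i : ℕ) :
    ∑ m ∈ S with (m.gcd n, (m / n).size) = (d, i), resonanceWeight θ C ψ n m
      ≤ 8 * C / (d * logb 2 (logb 2 n) ^ 2) * returnDensity θ (ψ n) (2 ^ i * (n / d)) := by
  classical
  set M := 2 ^ i * (n / d)
  set B := 8 * C / (d * logb 2 (logb 2 n) ^ 2) / (M : ℝ) ^ 2
  have hterm : ∀ m ∈ S.filter fun m => (m.gcd n, (m / n).size) = (d, i),
      resonanceWeight θ C ψ n m ≤ if IsResonant θ (ψ n) m n then B else 0 := by
    intro m hm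
    obtain ⟨-, hfib⟩ := Finset.mem_filter.1 hm
    obtain ⟨rfl, rfl⟩ := Prod.mk.inj hfib
    split_ifs with hres
    · refine resonanceWeight_le hC hn ?_ ?_
      · exact Nat.mul_pos (Nat.two_pow_pos _)
          (Nat.div_pos (Nat.gcd_le_right m hn) (Nat.gcd_pos_of_pos_right m hn))
      · rw [mul_assoc, Nat.div_mul_cancel (m.gcd_dvd_right n)]
        exact two_pow_size_div_mul_le m n
    · rw [resonanceWeight, if_neg hres]
  calc ∑ m ∈ S with (m.gcd n, (m / n).size) = (d, i), resonanceWeight θ C ψ n m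
      ≤ ((S.filter fun m => (m.gcd n, (m / n).size) = (d, i) ∧
          IsResonant θ (ψ n) m n).card : ℝ) * B := by
        refine (Finset.sum_le_sum hterm).trans_eq ?_
        rw [← Finset.sum_filter, Finset.filter_filter, Finset.sum_const, nsmul_eq_mul]
    _ ≤ returnCount θ M (2 * M * ψ n) * B := by
        gcongr
        exact card_isResonant_fiber_le hn hψ S d i
    _ = _ := by
        rw [returnDensity]
        ring

namespace IsAdmissible

theorem sum_returnDensity_two_pow_mul_div_le (h : IsAdmissible θ C ψ n) (hd : d ∈ n.divisors)
    (I : ℕ) :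
    ∑ i ∈ Finset.range I, returnDensity θ (ψ n) (2 ^ i * (n / d))
      ≤ 32 * logb 2 (logb 2 n) * ψ n + 14 * d / (n * logb 2 n ^ 3) := by
  have hk : n / d ∈ Finset.Icc 1 n :=
    Finset.mem_Icc.2 ⟨Nat.div_pos (Nat.divisor_le hd) (Nat.pos_of_mem_divisors hd),
      Nat.div_le_self n d⟩
  refine (h.sum_returnDensity_two_pow_mul_le hk I).trans_eq ?_
  rw [Nat.cast_div_charZero (Nat.dvd_of_mem_divisors hd)]
  field_simp

theorem sum_divisors_scale_bound_le (h : IsAdmissible θ C ψ n) :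
    ∑ d ∈ n.divisors, 8 * C / (d * logb 2 (logb 2 n) ^ 2) *
        (32 * logb 2 (logb 2 n) * ψ n + 14 * d / (n * logb 2 n ^ 3))
      ≤ C * (1136 + 256 * C) * ψ n := by
  have hL := h.one_le_loglog
  have hx := h.two_le_log
  have hC := h.const_pos
  have hψ := h.pos
  have hn : (0 : ℝ) < n := by exact_mod_cast h.index_pos
  calc ∑ d ∈ n.divisors, 8 * C / (d * logb 2 (logb 2 n) ^ 2) *
        (32 * logb 2 (logb 2 n) * ψ n + 14 * d / (n * logb 2 n ^ 3))
      = 256 * C * ψ n / logb 2 (logb 2 n) * ∑ d ∈ n.divisors, (d : ℝ)⁻¹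
          + 112 * C / (logb 2 (logb 2 n) ^ 2 * (n * logb 2 n ^ 3)) * n.divisors.card := by
        rw [Finset.mul_sum, ← nsmul_eq_mul', ← Finset.sum_const, ← Finset.sum_add_distrib]
        refine Finset.sum_congr rfl fun d hd => ?_
        have hd : (0 : ℝ) < d := by exact_mod_cast Nat.pos_of_mem_divisors hd
        field_simp
        ring
    _ ≤ 256 * C * ψ n / logb 2 (logb 2 n) * ((4 + C) * logb 2 (logb 2 n))
          + 112 * C / (logb 2 (logb 2 n) ^ 2 * (n * logb 2 n ^ 3))
            * (ψ n * (n * logb 2 n ^ 3)) := by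
        gcongr
        · exact h.sum_inv_divisors_le
        · exact h.card_divisors_le
    _ = 256 * C * (4 + C) * ψ n + 112 * C * ψ n / logb 2 (logb 2 n) ^ 2 := by field_simp
    _ ≤ 256 * C * (4 + C) * ψ n + 112 * C * ψ n := by
        gcongr
        exact div_le_self (by positivity) (one_le_pow₀ hL)
    _ = C * (1136 + 256 * C) * ψ n := by ring

theorem sum_resonanceWeight_le (h : IsAdmissible θ C ψ n) (S : Finset ℕ) :
    ∑ m ∈ S, resonanceWeight θ C ψ n m ≤ C * (1136 + 256 * C) * ψ n := by
  have hL := h.one_le_loglog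
  have hC := h.const_pos
  have hmaps : ∀ m ∈ S,
      (m.gcd n, (m / n).size) ∈ n.divisors ×ˢ Finset.range (S.sup id + 1) := by
    intro m hm
    refine Finset.mk_mem_product (Nat.mem_divisors.2 ⟨m.gcd_dvd_right n, h.index_pos.ne'⟩) ?_
    refine Finset.mem_range_succ_iff.2 (Nat.size_le.2 ?_)
    exact (Nat.div_le_self m n).trans_lt
      ((Finset.le_sup (f := id) hm).trans_lt Nat.lt_two_pow_self)
  calc ∑ m ∈ S, resonanceWeight θ C ψ n m
      = ∑ d ∈ n.divisors, ∑ i ∈ Finset.range (S.sup id + 1),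
          ∑ m ∈ S with (m.gcd n, (m / n).size) = (d, i), resonanceWeight θ C ψ n m := by
        rw [← Finset.sum_product', Finset.sum_fiberwise_of_maps_to hmaps]
    _ ≤ ∑ d ∈ n.divisors, 8 * C / (d * logb 2 (logb 2 n) ^ 2) *
          (32 * logb 2 (logb 2 n) * ψ n + 14 * d / (n * logb 2 n ^ 3)) := by
        refine Finset.sum_le_sum fun d hd => ?_
        refine (Finset.sum_le_sum fun i _ =>
          sum_fiber_resonanceWeight_le hC.le h.index_pos h.pos.le S d i).trans ?_
        rw [← Finset.mul_sum]
        gcongr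
        exact h.sum_returnDensity_two_pow_mul_div_le hd _
    _ ≤ C * (1136 + 256 * C) * ψ n := h.sum_divisors_scale_bound_le

theorem volume_real_inter_le_add_ite (hm : IsAdmissible θ C ψ m) (hn : IsAdmissible θ C ψ n) :
    volume.real (nsmulBall m θ (ψ m) ∩ nsmulBall n θ (ψ n))
      ≤ volume.real (nsmulBall m θ (ψ m)) * volume.real (nsmulBall n θ (ψ n))
        + ((if m = n then volume.real (nsmulBall n θ (ψ n)) else 0)
          + (resonanceWeight θ C ψ m n + resonanceWeight θ C ψ n m)) := by
  split_ifs with hmn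
  · subst hmn
    rw [Set.inter_self]
    have hres : 0 ≤ resonanceWeight θ C ψ m m := resonanceWeight_nonneg hm.const_pos.le
    nlinarith [measureReal_nonneg (μ := volume) (s := nsmulBall m θ (ψ m))]
  · rw [zero_add]
    exact hm.volume_real_inter_le_add_resonanceWeight hn hmn

theorem sum_sum_volume_real_inter_le {S : Finset ℕ} (hS : ∀ n ∈ S, IsAdmissible θ C ψ n) :
    ∑ m ∈ S, ∑ n ∈ S, volume.real (nsmulBall m θ (ψ m) ∩ nsmulBall n θ (ψ n))
      ≤ (∑ n ∈ S, volume.real (nsmulBall n θ (ψ n))) ^ 2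
        + (1 + C * (1136 + 256 * C)) * ∑ n ∈ S, volume.real (nsmulBall n θ (ψ n)) := by
  set v : ℕ → ℝ := fun n => volume.real (nsmulBall n θ (ψ n))
  set K := C * (1136 + 256 * C)
  have hres : ∑ m ∈ S, ∑ n ∈ S, resonanceWeight θ C ψ m n ≤ K / 2 * ∑ n ∈ S, v n := by
    rw [Finset.mul_sum]
    refine Finset.sum_le_sum fun m hm => ((hS m hm).sum_resonanceWeight_le S).trans_eq ?_
    simp only [v, (hS m hm).volume_real_nsmulBall]
    ring
  calc ∑ m ∈ S, ∑ n ∈ S, volume.real (nsmulBall m θ (ψ m) ∩ nsmulBall n θ (ψ n))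
      ≤ ∑ m ∈ S, ∑ n ∈ S, (v m * v n + ((if m = n then v n else 0)
          + (resonanceWeight θ C ψ m n + resonanceWeight θ C ψ n m))) :=
        Finset.sum_le_sum fun m hm => Finset.sum_le_sum fun n hn =>
          (hS m hm).volume_real_inter_le_add_ite (hS n hn)
    _ = (∑ n ∈ S, v n) ^ 2 + (∑ n ∈ S, v n
          + 2 * ∑ m ∈ S, ∑ n ∈ S, resonanceWeight θ C ψ m n) := by
        simp only [Finset.sum_add_distrib]
        rw [Finset.sum_comm (f := fun m n => resonanceWeight θ C ψ n m), ← two_mul, sq,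
          Finset.sum_mul_sum]
        congr 2
        exact Finset.sum_congr rfl fun m hm => by rw [Finset.sum_ite_eq, if_pos hm]
    _ ≤ (∑ n ∈ S, v n) ^ 2 + (∑ n ∈ S, v n + 2 * (K / 2 * ∑ n ∈ S, v n)) := by gcongr
    _ = (∑ n ∈ S, v n) ^ 2 + (1 + K) * ∑ n ∈ S, v n := by ring

end IsAdmissible

end Resonance

section BorelCantelli

variable {Ω ι : Type*} [MeasurableSpace Ω] {μ : Measure Ω} [IsProbabilityMeasure μ] {A : ι → Set Ω}

theorem memLp_two_indicator_one {s : Set Ω} (hs : MeasurableSet s) :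
    MemLp (s.indicator (1 : Ω → ℝ)) 2 μ :=
  memLp_indicator_const 2 hs 1 (.inr (measure_ne_top μ s))

theorem integral_sum_indicator_one (hA : ∀ i, MeasurableSet (A i)) (s : Finset ι) :
    ∫ x, ∑ i ∈ s, (A i).indicator (1 : Ω → ℝ) x ∂μ = ∑ i ∈ s, μ.real (A i) := by
  rw [integral_finsetSum _ fun i _ => (memLp_two_indicator_one (hA i)).integrable one_le_two]
  exact Finset.sum_congr rfl fun i _ => integral_indicator_one (hA i)

theorem variance_sum_indicator_one (hA : ∀ i, MeasurableSet (A i)) (s : Finset ι) :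
    ProbabilityTheory.variance (fun x => ∑ i ∈ s, (A i).indicator (1 : Ω → ℝ) x) μ
      = ∑ i ∈ s, ∑ j ∈ s, μ.real (A i ∩ A j) - (∑ i ∈ s, μ.real (A i)) ^ 2 := by
  rw [ProbabilityTheory.variance_fun_sum' fun i _ => memLp_two_indicator_one (hA i), sq,
    Finset.sum_mul_sum, ← Finset.sum_sub_distrib]
  refine Finset.sum_congr rfl fun i _ => ?_
  rw [← Finset.sum_sub_distrib]
  refine Finset.sum_congr rfl fun j _ => ?_
  rw [ProbabilityTheory.covariance_eq_sub (memLp_two_indicator_one (hA i))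
    (memLp_two_indicator_one (hA j)), ← Set.inter_indicator_one,
    integral_indicator_one ((hA i).inter (hA j)), integral_indicator_one (hA i),
    integral_indicator_one (hA j)]

theorem measure_encard_le_le_of_sum_sum_measure_inter_le (hA : ∀ i, MeasurableSet (A i))
    {s : Finset ι} {K : ℝ} {n : ℕ} (hn : 2 * n < ∑ i ∈ s, μ.real (A i))
    (h : ∑ i ∈ s, ∑ j ∈ s, μ.real (A i ∩ A j)
      ≤ (∑ i ∈ s, μ.real (A i)) ^ 2 + K * ∑ i ∈ s, μ.real (A i)) :
    μ {x | {i | x ∈ A i}.encard ≤ n} ≤ ENNReal.ofReal (4 * K / ∑ i ∈ s, μ.real (A i)) := by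
  set P := ∑ i ∈ s, μ.real (A i)
  set N : Ω → ℝ := fun x => ∑ i ∈ s, (A i).indicator (1 : Ω → ℝ) x
  have hP : 0 < P := lt_of_le_of_lt (by positivity) hn
  have hmean : ∫ x, N x ∂μ = P := integral_sum_indicator_one hA s
  have hsub : {x | {i | x ∈ A i}.encard ≤ n} ⊆ {x | P / 2 ≤ |N x - ∫ y, N y ∂μ|} := by
    intro x hx
    have hN : N x ≤ n := by
      have hcount : N x = ({i ∈ (s : Set ι) | x ∈ A i}.ncard : ℝ) := by
        classical
        simp [N, Set.indicator_apply, ← Finset.coe_filter]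
      rw [hcount]
      have hmono : {i ∈ (s : Set ι) | x ∈ A i}.encard ≤ n :=
        (Set.encard_le_encard fun i hi => hi.2).trans hx
      exact_mod_cast (Set.encard_le_coe_iff_finite_ncard_le.1 hmono).2
    rw [Set.mem_ofPred_eq, hmean, abs_sub_comm]
    exact le_trans (by linarith) (le_abs_self _)
  calc μ {x | {i | x ∈ A i}.encard ≤ n} ≤ _ := measure_mono hsub
    _ ≤ ENNReal.ofReal (ProbabilityTheory.variance N μ / (P / 2) ^ 2) :=
      ProbabilityTheory.meas_ge_le_variance_div_sq
        (memLp_finsetSum _ fun i _ => memLp_two_indicator_one (hA i)) (by positivity)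
    _ ≤ ENNReal.ofReal (K * P / (P / 2) ^ 2) := by
      gcongr
      rw [variance_sum_indicator_one hA]
      linarith
    _ = ENNReal.ofReal (4 * K / P) := by
      congr 1
      field_simp
      ring

theorem ae_infinite_of_sum_sum_measure_inter_le {κ : Type*} {l : Filter κ} [l.NeBot]
    (hA : ∀ i, MeasurableSet (A i)) {s : κ → Finset ι} {K : ℝ}
    (h : ∀ k, ∑ i ∈ s k, ∑ j ∈ s k, μ.real (A i ∩ A j)
      ≤ (∑ i ∈ s k, μ.real (A i)) ^ 2 + K * ∑ i ∈ s k, μ.real (A i))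
    (hdiv : Tendsto (fun k => ∑ i ∈ s k, μ.real (A i)) l atTop) :
    ∀ᵐ x ∂μ, {i | x ∈ A i}.Infinite := by
  have hnull (n : ℕ) : μ {x | {i | x ∈ A i}.encard ≤ n} = 0 := by
    have hlim : Tendsto (fun k => ENNReal.ofReal (4 * K / ∑ i ∈ s k, μ.real (A i))) l (nhds 0) := by
      simpa only [ENNReal.ofReal_zero] using
        ENNReal.tendsto_ofReal (hdiv.const_div_atTop (4 * K))
    refine le_antisymm (ge_of_tendsto hlim ?_) zero_le
    filter_upwards [hdiv.eventually_gt_atTop (2 * n)] with k hk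
    exact measure_encard_le_le_of_sum_sum_measure_inter_le hA hk (h k)
  filter_upwards [ae_all_iff.2 fun n => measure_eq_zero_iff_ae_notMem.1 (hnull n)] with x hx hfin
  exact hx _ hfin.encard_eq_coe.le

end BorelCantelli

section Main

open Asymptotics

variable {γ C : ℝ} {ψ : ℕ → ℝ}

theorem tendsto_sum_atTop_of_eventually_le_add {f g w : ℕ → ℝ} (hw : Summable w)
    (hfg : ∀ᶠ n in atTop, f n ≤ g n + w n)
    (hf : Tendsto (fun N => ∑ n ∈ Finset.Icc 1 N, f n) atTop atTop) :
    Tendsto (fun N => ∑ n ∈ Finset.Icc 1 N, g n) atTop atTop := by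
  have hexcess : Summable fun n => max (f n - g n) 0 := by
    refine hw.abs.of_norm_bounded_eventually_nat ?_
    filter_upwards [hfg] with n hn
    rw [Real.norm_of_nonneg (le_max_right _ _)]
    exact max_le (by linarith [le_abs_self (w n)]) (abs_nonneg _)
  refine tendsto_atTop_mono (fun N => ?_)
    (tendsto_atTop_add_const_right _ (-∑' n, max (f n - g n) 0) hf)
  have hsum : ∑ n ∈ Finset.Icc 1 N, (f n - g n) ≤ ∑' n, max (f n - g n) 0 :=
    (Finset.sum_le_sum fun n _ => le_max_left _ _).trans
      (hexcess.sum_le_tsum _ fun n _ => le_max_right _ _)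
  rw [Finset.sum_sub_distrib] at hsum
  linarith

theorem eventually_logb_two_pow_le (k : ℕ) : ∀ᶠ n : ℕ in atTop, logb 2 n ^ k ≤ n := by
  have hlittle : (fun n : ℕ => log n ^ k) =o[atTop] fun n : ℕ => (n : ℝ) :=
    isLittleO_pow_log_id_atTop.comp_tendsto tendsto_natCast_atTop_atTop
  filter_upwards [hlittle.bound (pow_pos (log_pos one_lt_two) k)] with n hn
  rw [logb, div_pow, div_le_iff₀' (pow_pos (log_pos one_lt_two) k)]
  exact (le_abs_self _).trans (hn.trans_eq (by rw [Real.norm_natCast]))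

theorem eventually_isAdmissible (hγ : Irrational γ)
    (hσ : sigmaExp γ =o[atTop] fun Q : ℕ => logb 2 Q / logb 2 (logb 2 Q))
    (hψ : ∀ᶠ n : ℕ in atTop, ψ n ≤ C / (n * logb 2 (logb 2 n) ^ 2)) :
    ∀ᶠ n : ℕ in atTop, divisorWeight n ≤ ψ n → IsAdmissible (γ : UnitAddCircle) C ψ n := by
  filter_upwards [hψ, eventually_returnCount_le hγ hσ |C|, eventually_logb_two_pow_le 3,
    tendsto_logb_two_natCast.eventually_ge_atTop 2,
    tendsto_logb_two_logb_two_natCast.eventually_ge_atTop 1,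
    tendsto_natCast_atTop_atTop.eventually_gt_atTop (2 * |C|)]
    with n hψn hcount hx3 hx hL hnC hweight
  have hn : (0 : ℝ) < n := (by positivity : 0 ≤ 2 * |C|).trans_lt hnC
  have hψ0 : 0 ≤ ψ n := (divisorWeight_nonneg n).trans hweight
  have hψC : ψ n ≤ |C| / n :=
    hψn.trans (div_le_div₀ (abs_nonneg C) (le_abs_self C) hn
      (le_mul_of_one_le_right hn.le (one_le_pow₀ hL)))
  refine ⟨hψC.trans_lt ?_, hx, hx3, hψn, hweight, fun M hM => ?_⟩
  · rw [div_lt_iff₀ hn]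
    linarith
  · have hM0 : (0 : ℝ) < M := by exact_mod_cast (Finset.mem_Icc.1 hM).1
    rw [returnDensity, div_le_iff₀ (by positivity)]
    exact (hcount M hM _ hψ0 hψC).trans_eq (by field_simp)

theorem volume_W_eq_one_of_ae
    (h : ∀ᵐ x : UnitAddCircle, {q : ℕ | x ∈ nsmulBall q γ (ψ q)}.Infinite) :
    volume (W ψ γ) = 1 := by
  have hae := (UnitAddCircle.measurePreserving_mk 0).quasiMeasurePreserving.ae h
  rw [zero_add] at hae
  have hW : ∀ᵐ x : ℝ ∂volume.restrict (Set.Ioc 0 1), x ∈ W ψ γ := by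
    filter_upwards [hae, ae_restrict_mem measurableSet_Ioc] with x hx hx01
    refine ⟨⟨hx01.1.le, hx01.2⟩, (hx.sdiff (Set.finite_singleton 0)).mono fun q hq => ?_⟩
    refine ⟨Nat.pos_of_ne_zero hq.2, ?_⟩
    rw [dnint_eq_norm, AddCircle.coe_sub, ← nsmul_eq_mul, AddCircle.coe_nsmul]
    exact mem_nsmulBall.1 hq.1
  refine le_antisymm ?_ ?_
  · calc volume (W ψ γ) ≤ volume (Set.Icc (0 : ℝ) 1) := measure_mono fun x hx => hx.1
      _ = 1 := by simp
  · calc (1 : ENNReal) = volume (Set.Ioc (0 : ℝ) 1) := by simp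
      _ = volume (W ψ γ ∩ Set.Ioc 0 1) := by
        rw [← Measure.restrict_apply_univ (Set.Ioc (0 : ℝ) 1),
          ← Measure.restrict_apply' measurableSet_Ioc]
        exact (measure_congr (eventuallyEq_univ.2 hW)).symm
      _ ≤ volume (W ψ γ) := measure_mono Set.inter_subset_left

theorem stmt0_general (ψ : ℕ → ℝ)
    (hO : ∃ C : ℝ, ∀ᶠ q : ℕ in atTop, ψ q ≤ C / (q * logb 2 (logb 2 q) ^ 2))
    (hdiv : Tendsto (fun Q : ℕ => ∑ q ∈ Finset.Icc 1 Q, ψ q) atTop atTop)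
    (γ : ℝ) (hγ : Irrational γ)
    (hσ : sigmaExp γ =o[atTop] fun Q : ℕ => logb 2 Q / logb 2 (logb 2 Q)) :
    volume (W ψ γ) = 1 := by
  classical
  obtain ⟨C, hC⟩ := hO
  set s : ℕ → Finset ℕ := fun Q =>
    (Finset.Icc 1 Q).filter (IsAdmissible (γ : UnitAddCircle) C ψ)
  have hs (Q : ℕ) : ∀ n ∈ s Q, IsAdmissible (γ : UnitAddCircle) C ψ n := fun n hn =>
    (Finset.mem_filter.1 hn).2
  have hadm : ∀ᶠ n in atTop,
      2 * ψ n ≤ (if IsAdmissible (γ : UnitAddCircle) C ψ n then 2 * ψ n else 0)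
        + 2 * divisorWeight n := by
    filter_upwards [eventually_isAdmissible hγ hσ hC] with n hn
    split_ifs with h
    · exact le_add_of_nonneg_right (by linarith [divisorWeight_nonneg n])
    · linarith [not_le.1 (mt hn h)]
  have hmeas : Tendsto (fun Q => ∑ q ∈ s Q, volume.real (nsmulBall q (γ : UnitAddCircle) (ψ q)))
      atTop atTop := by
    have hsum := tendsto_sum_atTop_of_eventually_le_add (summable_divisorWeight.mul_left 2) hadm
      (by simpa only [← Finset.mul_sum] using hdiv.const_mul_atTop two_pos)
    refine hsum.congr fun Q => ?_
    rw [← Finset.sum_filter]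
    exact Finset.sum_congr rfl fun n hn => (hs Q n hn).volume_real_nsmulBall.symm
  have : IsProbabilityMeasure (volume : Measure UnitAddCircle) := ⟨UnitAddCircle.measure_univ⟩
  exact volume_W_eq_one_of_ae (ae_infinite_of_sum_sum_measure_inter_le
    (fun _ => measurableSet_nsmulBall) (fun Q => IsAdmissible.sum_sum_volume_real_inter_le (hs Q))
    hmeas)

end Main

theorem stmt0 (ψ : ℕ → ℝ) (hψ0 : ∀ q, 0 ≤ ψ q)
    (hψhalf : ∀ q, 1 ≤ q → ψ q < 1/2)
    (hO : ∃ C > (0:ℝ), ∀ q : ℕ, 3 ≤ q →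
      ψ q ≤ C / ((q : ℝ) * (Real.logb 2 (Real.logb 2 q)) ^ 2))
    (hdiv : Tendsto (fun Q : ℕ => ∑ q ∈ Finset.Icc 1 Q, ψ q) atTop atTop)
    (γ : ℝ) (hγ : Irrational γ) (htame : TamelyLiouville γ) :
    volume (W ψ γ) = 1 := by
  obtain ⟨C, -, hC⟩ := hO
  exact stmt0_general ψ ⟨C, (eventually_ge_atTop 3).mono hC⟩ hdiv γ hγ htame.sigmaExp_isLittleO
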